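/- arXiv:2107.09829 — 8 statements merged into one kernel-verified Lean document; each statement's English description precedes it below -/
import Mathlib

section
/- Let d be a real number with 0 < d < 1/2. Then the series ∑_{n=1}^∞ ((n+1)^{2d+1} + (n−1)^{2d+1} − 2 n^{2d+1}) of nonnegative terms diverges; i.e., the function n ↦ (n+1)^{2d+1} + (n−1)^{2d+1} − 2 n^{2d+1} is not summable over n ≥ 1. -/
open Real

/-- for `d ∈ (0,1/2)`, the series
`∑_{n=1}^∞ ((n+1)^{2d+1} + (n−1)^{2d+1} − 2 n^{2d+1})` diverges, i.e. the summands
(indexed here by `n + 1` for `n : ℕ`, so the sum runs over `n ≥ 1`) are not summable. -/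
theorem increment_covariance_not_summable (d : ℝ) (hd0 : 0 < d) (hd2 : d < 1 / 2) :
    ¬ Summable (fun n : ℕ =>
        (((n : ℝ) + 1) + 1) ^ (2 * d + 1) + (((n : ℝ) + 1) - 1) ^ (2 * d + 1)
          - 2 * ((n : ℝ) + 1) ^ (2 * d + 1)) := by
  intro h
  have ht := h.hasSum.tendsto_sum_nat
  have hS : ∀ N : ℕ, ∑ n ∈ Finset.range N, ((((n : ℝ) + 1) + 1) ^ (2 * d + 1)
      + (((n : ℝ) + 1) - 1) ^ (2 * d + 1) - 2 * ((n : ℝ) + 1) ^ (2 * d + 1))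
      = ((N : ℝ) + 1) ^ (2 * d + 1) - (N : ℝ) ^ (2 * d + 1) - 1 := by
    intro N
    induction N with
    | zero =>
      have : (2 * d + 1) ≠ 0 := by linarith
      simp [Real.zero_rpow this]
    | succ k ih =>
      rw [Finset.sum_range_succ, ih]
      push_cast
      rw [add_sub_cancel_right]
      ring
  have hlow : ∀ N : ℕ, (N : ℝ) ^ (2 * d) + (-1) ≤ ∑ n ∈ Finset.range N,
      ((((n : ℝ) + 1) + 1) ^ (2 * d + 1)
      + (((n : ℝ) + 1) - 1) ^ (2 * d + 1) - 2 * ((n : ℝ) + 1) ^ (2 * d + 1)) := by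
    intro N
    rw [hS]
    have hN : (0 : ℝ) ≤ N := Nat.cast_nonneg N
    have h1 : (N : ℝ) ^ (2 * d + 1) = (N : ℝ) ^ (2 * d) * N :=
      Real.rpow_add_one' hN (by linarith)
    have h2 : ((N : ℝ) + 1) ^ (2 * d + 1) = ((N : ℝ) + 1) ^ (2 * d) * (N + 1) :=
      Real.rpow_add_one' (by linarith) (by linarith)
    have h3 : (N : ℝ) ^ (2 * d) ≤ ((N : ℝ) + 1) ^ (2 * d) :=
      Real.rpow_le_rpow hN (by linarith) (by linarith)
    rw [h1, h2]
    nlinarith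
  have hinf : Filter.Tendsto (fun N : ℕ => (N : ℝ) ^ (2 * d) + (-1)) Filter.atTop Filter.atTop :=
    Filter.tendsto_atTop_add_const_right _ _
      ((tendsto_rpow_atTop (by linarith : 0 < 2 * d)).comp tendsto_natCast_atTop_atTop)
  exact not_tendsto_nhds_of_tendsto_atTop (Filter.tendsto_atTop_mono hlow hinf) _ ht
end

section
/- Let d be a real number with 0 < d < 1/2 and let λ₁, λ₂ be real numbers with λ₁ < 0 and λ₂ < 0. Then the function (u,v) ↦ e^{λ₁ u + λ₂ v} |u − v|^{2d−1} is integrable on (0,∞) × (0,∞) and ∫_0^∞ ∫_0^∞ e^{λ₁ u + λ₂ v} |u − v|^{2d−1} dv du = Γ(2d) ((−λ₁)^{−2d} + (−λ₂)^{−2d}) / (−(λ₁ + λ₂)). -/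
open MeasureTheory Real Set

/-- The density in the sheared coordinates. -/
noncomputable def shearG (d s b : ℝ) (z : ℝ × ℝ) : ℝ :=
  (Ioi (0 : ℝ)).indicator (fun x => Real.exp (s * x)) z.1 *
    (Ioi (0 : ℝ)).indicator (fun y => y ^ (2 * d - 1) * Real.exp (-((-b) * y))) z.2

lemma shearG_integrable (d s b : ℝ) (hd0 : 0 < d) (hs : s < 0) (hb : b < 0) :
    Integrable (shearG d s b) ((volume : Measure ℝ).prod volume) := by
  have key := integral_rpow_mul_exp_neg_mul_Ioi (a := 2 * d) (r := -b) (by linarith) (by linarith)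
  have h2 : IntegrableOn (fun y : ℝ => y ^ (2 * d - 1) * Real.exp (-((-b) * y))) (Ioi 0) := by
    refine .of_integral_ne_zero ?_
    rw [key]
    have h1 : 0 < -b := by linarith
    have h3 : 0 < Real.Gamma (2 * d) := Real.Gamma_pos_of_pos (by linarith)
    positivity
  exact ((integrableOn_exp_mul_Ioi hs 0).integrable_indicator measurableSet_Ioi).mul_prod
    (h2.integrable_indicator measurableSet_Ioi)

lemma shearG_integral (d s b : ℝ) (hd0 : 0 < d) (hs : s < 0) (hb : b < 0) :
    ∫ z, shearG d s b z ∂((volume : Measure ℝ).prod volume) =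
      Real.Gamma (2 * d) * (-b) ^ (-(2 * d)) / (-s) := by
  have key := integral_rpow_mul_exp_neg_mul_Ioi (a := 2 * d) (r := -b) (by linarith) (by linarith)
  unfold shearG
  rw [integral_prod_mul, integral_indicator measurableSet_Ioi, integral_indicator measurableSet_Ioi,
    key, integral_exp_mul_Ioi hs, mul_zero, Real.exp_zero, one_div,
    Real.inv_rpow (by linarith), ← Real.rpow_neg (by linarith)]
  field_simp

lemma shear_decomp (d l₁ l₂ : ℝ) (hd2 : d < 1 / 2) (p : ℝ × ℝ) :
    (Ioi (0 : ℝ) ×ˢ Ioi (0 : ℝ)).indicator (fun p : ℝ × ℝ =>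
        Real.exp (l₁ * p.1 + l₂ * p.2) * |p.1 - p.2| ^ (2 * d - 1)) p =
      shearG d (l₁ + l₂) l₂ (p.1, p.2 - p.1) + shearG d (l₁ + l₂) l₁ (p.2, p.1 - p.2) := by
  obtain ⟨u, v⟩ := p
  simp only [shearG, indicator_apply, mem_prod, mem_Ioi, sub_pos]
  rcases lt_trichotomy u v with h | h | h
  · rw [if_pos h, if_neg h.not_gt, mul_zero, add_zero]
    by_cases hu : 0 < u
    · rw [if_pos ⟨hu, hu.trans h⟩, if_pos hu, abs_sub_comm, abs_of_pos (sub_pos.2 h),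
        mul_left_comm, ← Real.exp_add, mul_comm]
      ring_nf
    · rw [if_neg (fun h => hu h.1), if_neg hu, zero_mul]
  · subst h
    simp [Real.zero_rpow (show 2 * d - 1 ≠ 0 by linarith)]
  · rw [if_pos h, if_neg h.not_gt, mul_zero, zero_add]
    by_cases hv : 0 < v
    · rw [if_pos ⟨hv.trans h, hv⟩, if_pos hv, abs_of_pos (sub_pos.2 h),
        mul_left_comm, ← Real.exp_add, mul_comm]
      ring_nf
    · rw [if_neg (fun h => hv h.2), if_neg hv, zero_mul]

/-- for `d ∈ (0,1/2)` and `λ₁, λ₂ < 0`, the function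
`(u,v) ↦ e^{λ₁u + λ₂v} |u−v|^{2d−1}` is integrable on `(0,∞)²` and
`∫∫ e^{λ₁u+λ₂v}|u−v|^{2d−1} dv du = Γ(2d)((−λ₁)^{−2d} + (−λ₂)^{−2d})/(−(λ₁+λ₂))`. -/
theorem flou_cross_covariance_integral (d l₁ l₂ : ℝ) (hd0 : 0 < d) (hd2 : d < 1 / 2)
    (hl₁ : l₁ < 0) (hl₂ : l₂ < 0) :
    IntegrableOn (fun p : ℝ × ℝ =>
        Real.exp (l₁ * p.1 + l₂ * p.2) * |p.1 - p.2| ^ (2 * d - 1))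
      (Ioi (0 : ℝ) ×ˢ Ioi (0 : ℝ)) ∧
    ∫ u in Ioi (0 : ℝ), ∫ v in Ioi (0 : ℝ),
        Real.exp (l₁ * u + l₂ * v) * |u - v| ^ (2 * d - 1) =
      Real.Gamma (2 * d) * ((-l₁) ^ (-(2 * d)) + (-l₂) ^ (-(2 * d))) / (-(l₁ + l₂)) := by
  have hs : l₁ + l₂ < 0 := by linarith
  have m1 := measurePreserving_prod_sub (volume : Measure ℝ) (volume : Measure ℝ)
  have m2 := measurePreserving_prod_sub_swap (volume : Measure ℝ) (volume : Measure ℝ)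
  have g1 := shearG_integrable d (l₁ + l₂) l₂ hd0 hs hl₂
  have g2 := shearG_integrable d (l₁ + l₂) l₁ hd0 hs hl₁
  have i1 := m1.integrable_comp_of_integrable g1
  have i2 := m2.integrable_comp_of_integrable g2
  have hS : MeasurableSet (Ioi (0 : ℝ) ×ˢ Ioi (0 : ℝ)) := measurableSet_Ioi.prod measurableSet_Ioi
  have hdec := funext (shear_decomp d l₁ l₂ hd2)
  have hI : IntegrableOn (fun p : ℝ × ℝ =>
        Real.exp (l₁ * p.1 + l₂ * p.2) * |p.1 - p.2| ^ (2 * d - 1))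
      (Ioi (0 : ℝ) ×ˢ Ioi (0 : ℝ)) ((volume : Measure ℝ).prod volume) := by
    rw [← integrable_indicator_iff hS, hdec]
    exact i1.add i2
  refine ⟨hI, ?_⟩
  have e1 := integral_map (μ := (volume : Measure ℝ).prod volume) m1.measurable.aemeasurable
    (f := shearG d (l₁ + l₂) l₂) (by rw [m1.map_eq]; exact g1.aestronglyMeasurable)
  have e2 := integral_map (μ := (volume : Measure ℝ).prod volume) m2.measurable.aemeasurable
    (f := shearG d (l₁ + l₂) l₁) (by rw [m2.map_eq]; exact g2.aestronglyMeasurable)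
  rw [m1.map_eq, shearG_integral d _ _ hd0 hs hl₂] at e1
  rw [m2.map_eq, shearG_integral d _ _ hd0 hs hl₁] at e2
  have h := setIntegral_prod _ hI
  refine h.symm.trans ?_
  rw [← integral_indicator hS, hdec]
  refine (integral_add i1 i2).trans ?_
  simp only [Function.comp_def]
  rw [← e1, ← e2]
  ring
end

section
/- Let d be a real number with 0 < d < 1/2 and let λ < 0. Then the function (u,v) ↦ e^{λ(u+v)} |u − v|^{2d−1} is integrable on (0,∞) × (0,∞) and ∫_0^∞ ∫_0^∞ e^{λ(u+v)} |u − v|^{2d−1} du dv = Γ(2d)/(−λ)^{2d+1}. -/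
open MeasureTheory Real Set

/-- The part of the integrand above the diagonal. -/
noncomputable def flouUpper (d l : ℝ) : ℝ × ℝ → ℝ :=
  indicator {p : ℝ × ℝ | 0 < p.1 ∧ p.1 < p.2}
    (fun p => Real.exp (l * (p.1 + p.2)) * |p.1 - p.2| ^ (2 * d - 1))

lemma flouUpper_shear (d l : ℝ) (p : ℝ × ℝ) :
    flouUpper d l (p.1, p.1 + p.2) =
      (Ioi (0:ℝ)).indicator (fun x => Real.exp (2 * l * x)) p.1 *
      (Ioi (0:ℝ)).indicator (fun s => s ^ (2 * d - 1) * Real.exp (-(-l * s))) p.2 := by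
  obtain ⟨x, s⟩ := p
  unfold flouUpper
  by_cases hx : 0 < x <;> by_cases hs : 0 < s <;> simp [indicator, hx, hs]
  have e : Real.exp (l * (x + (x + s))) = Real.exp (2 * l * x) * Real.exp (l * s) := by
    rw [← Real.exp_add]; ring_nf
  rw [e, abs_of_pos hs]; ring

lemma flou_int_pow (d l : ℝ) (hd0 : 0 < d) (hl : l < 0) :
    ∫ s in Ioi (0:ℝ), s ^ (2 * d - 1) * Real.exp (-(-l * s)) =
      (1 / (-l)) ^ (2 * d) * Real.Gamma (2 * d) :=
  Real.integral_rpow_mul_exp_neg_mul_Ioi (by linarith) (by linarith)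

lemma flou_shear (d l : ℝ) (hd0 : 0 < d) (hl : l < 0) :
    Integrable (fun p : ℝ × ℝ => flouUpper d l (p.1, p.1 + p.2)) ∧
    ∫ p : ℝ × ℝ, flouUpper d l (p.1, p.1 + p.2) =
      (1 / (-(2 * l))) * ((1 / (-l)) ^ (2 * d) * Real.Gamma (2 * d)) := by
  simp_rw [flouUpper_shear]
  have h2 : 2 * l < 0 := by linarith
  have i1 : IntegrableOn (fun x => Real.exp (2 * l * x)) (Ioi 0) :=
    integrableOn_exp_mul_Ioi h2 0
  have i2 : IntegrableOn (fun s : ℝ => s ^ (2 * d - 1) * Real.exp (-(-l * s))) (Ioi 0) := by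
    apply Integrable.of_integral_ne_zero
    rw [flou_int_pow d l hd0 hl]
    have := Real.Gamma_pos_of_pos (show 0 < 2 * d by linarith)
    have : 0 < -l := by linarith
    positivity
  constructor
  · exact (i1.integrable_indicator measurableSet_Ioi).mul_prod
      (i2.integrable_indicator measurableSet_Ioi)
  · rw [Measure.volume_eq_prod, integral_prod_mul, integral_indicator measurableSet_Ioi,
      integral_indicator measurableSet_Ioi, flou_int_pow d l hd0 hl, integral_exp_mul_Ioi h2]
    congr 1
    simp [neg_div, div_neg]

lemma flou_upper (d l : ℝ) (hd0 : 0 < d) (hl : l < 0) :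
    Integrable (flouUpper d l) ∧
    ∫ p : ℝ × ℝ, flouUpper d l p =
      (1 / (-(2 * l))) * ((1 / (-l)) ^ (2 * d) * Real.Gamma (2 * d)) := by
  have mp : MeasurePreserving (MeasurableEquiv.shearAddRight ℝ)
      (volume : Measure (ℝ × ℝ)) volume :=
    measurePreserving_prod_add volume volume
  obtain ⟨h1, h2⟩ := flou_shear d l hd0 hl
  refine ⟨(mp.integrable_comp_emb (MeasurableEquiv.measurableEmbedding _)).1 h1, ?_⟩
  rw [← h2]
  exact (mp.integral_comp (MeasurableEquiv.measurableEmbedding _) (flouUpper d l)).symm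

lemma flou_split (d l : ℝ) (hd2 : d < 1 / 2) :
    (Ioi (0 : ℝ) ×ˢ Ioi (0 : ℝ)).indicator (fun p : ℝ × ℝ =>
        Real.exp (l * (p.1 + p.2)) * |p.1 - p.2| ^ (2 * d - 1)) =
      fun p => flouUpper d l p + flouUpper d l p.swap := by
  ext ⟨x, y⟩
  have hne : 2 * d - 1 ≠ 0 := by linarith
  unfold flouUpper
  simp only [indicator, mem_prod, mem_Ioi, mem_ofPred_eq, Prod.swap]
  rcases lt_trichotomy x y with h | h | h
  · by_cases hx : 0 < x
    · simp [hx, h, hx.trans h, h.le]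
    · simp [hx, h.le]
  · subst h
    simp [Real.zero_rpow hne]
  · by_cases hx : 0 < y
    · simp [hx, h, hx.trans h, h.le, add_comm x y, abs_sub_comm x y]
    · simp [hx, h.le]

/-- for `d ∈ (0,1/2)` and `λ < 0`, the function
`(u,v) ↦ e^{λ(u+v)} |u−v|^{2d−1}` is integrable on `(0,∞)²` and
`∫∫ e^{λ(u+v)}|u−v|^{2d−1} du dv = Γ(2d)/(−λ)^{2d+1}`. -/
theorem flou_second_moment_integral (d l : ℝ) (hd0 : 0 < d) (hd2 : d < 1 / 2) (hl : l < 0) :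
    IntegrableOn (fun p : ℝ × ℝ =>
        Real.exp (l * (p.1 + p.2)) * |p.1 - p.2| ^ (2 * d - 1))
      (Ioi (0 : ℝ) ×ˢ Ioi (0 : ℝ)) ∧
    ∫ v in Ioi (0 : ℝ), ∫ u in Ioi (0 : ℝ),
        Real.exp (l * (u + v)) * |u - v| ^ (2 * d - 1) =
      Real.Gamma (2 * d) / (-l) ^ (2 * d + 1) := by
  obtain ⟨h1, h2⟩ := flou_upper d l hd0 hl
  have hm : MeasurableSet (Ioi (0 : ℝ) ×ˢ Ioi (0 : ℝ)) :=
    measurableSet_Ioi.prod measurableSet_Ioi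
  have h1s : Integrable (fun p : ℝ × ℝ => flouUpper d l p.swap) := h1.swap
  have hI : IntegrableOn (fun p : ℝ × ℝ =>
        Real.exp (l * (p.1 + p.2)) * |p.1 - p.2| ^ (2 * d - 1))
      (Ioi (0 : ℝ) ×ˢ Ioi (0 : ℝ)) := by
    rw [← integrable_indicator_iff hm, flou_split d l hd2]
    exact h1.add h1s
  refine ⟨hI, ?_⟩
  have hs : ∫ p : ℝ × ℝ, flouUpper d l p.swap = ∫ p : ℝ × ℝ, flouUpper d l p :=
    integral_prod_swap (μ := (volume : Measure ℝ)) (ν := (volume : Measure ℝ)) (flouUpper d l)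
  have key := setIntegral_prod (μ := (volume : Measure ℝ)) (ν := (volume : Measure ℝ)) _ hI
  rw [← Measure.volume_eq_prod, ← integral_indicator hm, flou_split d l hd2,
    integral_add h1 h1s, hs, h2] at key
  have comm : ∀ u v : ℝ, Real.exp (l * (u + v)) * |u - v| ^ (2 * d - 1) =
      Real.exp (l * (v + u)) * |v - u| ^ (2 * d - 1) := fun u v => by
    rw [add_comm, abs_sub_comm]
  have e : ∫ v in Ioi (0 : ℝ), ∫ u in Ioi (0 : ℝ),
        Real.exp (l * (u + v)) * |u - v| ^ (2 * d - 1) =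
      ∫ v in Ioi (0 : ℝ), ∫ u in Ioi (0 : ℝ),
        Real.exp (l * (v + u)) * |v - u| ^ (2 * d - 1) := by
    congr 1; ext v; congr 1; ext u; exact comm u v
  refine (e.trans key.symm).trans ?_
  have hp : 0 < -l := by linarith
  rw [Real.rpow_add hp, Real.rpow_one, Real.div_rpow zero_le_one hp.le, Real.one_rpow]
  have := Real.rpow_pos_of_pos hp (2 * d)
  have hl' := hl.ne
  field_simp
  ring
end

section
/- Let d and h be real numbers with 0 < d < 1/2 and 0 < h < 1/2 − d, and let α > 0. Then the function (u,v) ↦ (1 + u/α)^{h−1} (1 + v/α)^{h−1} |u − v|^{2d−1} is integrable on (0,∞) × (0,∞) and ∫_0^∞ ∫_0^∞ (1 + u/α)^{h−1} (1 + v/α)^{h−1} |u − v|^{2d−1} dv du = 2 α^{2d+1} B(1 − h − 2d, 2d) / (1 − 2(h + d)), where B denotes the Beta function. -/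
open MeasureTheory Real Set

lemma beta_lintegral {p q : ℝ} (hp : 0 < p) (hq : 0 < q) :
    ∫⁻ x in Ioo (0 : ℝ) 1, ENNReal.ofReal (x ^ (p - 1) * (1 - x) ^ (q - 1)) =
      ENNReal.ofReal (ProbabilityTheory.beta p q) := by
  have hb := ProbabilityTheory.beta_pos hp hq
  have h1 := ProbabilityTheory.lintegral_betaPDF_eq_one hp hq
  rw [ProbabilityTheory.lintegral_betaPDF] at h1
  have h2 : ∀ x : ℝ, ENNReal.ofReal (x ^ (p - 1) * (1 - x) ^ (q - 1)) =
      ENNReal.ofReal (ProbabilityTheory.beta p q) *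
      ENNReal.ofReal (1 / ProbabilityTheory.beta p q * x ^ (p - 1) * (1 - x) ^ (q - 1)) := by
    intro x
    rw [← ENNReal.ofReal_mul hb.le]
    congr 1
    field_simp
  simp_rw [h2]
  rw [lintegral_const_mul' _ _ ENNReal.ofReal_ne_top, h1, mul_one]

lemma pointwise_identity (d h A C X Y : ℝ) :
    (rexp A / rexp X ^ 2) * ((rexp A / rexp C) ^ (h - 1) * (rexp A / (rexp X * rexp C)) ^ (h - 1) *
      (rexp A * rexp Y / rexp X) ^ (2 * d - 1)) =
    (rexp C ^ (2 - 2 * h) * rexp A ^ (2 * h + 2 * d - 2)) *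
      (rexp X ^ ((1 - h - 2 * d) - 1) * rexp Y ^ (2 * d - 1)) := by
  rw [← Real.exp_nat_mul]
  simp only [← Real.exp_add, ← Real.exp_sub, ← Real.exp_mul]
  congr 1
  push_cast
  ring

lemma pointwise_identity' (d h : ℝ) {a α x y : ℝ} (ha : 0 < a) (hα : 0 < α) (hx : 0 < x)
    (hy : 0 < y) :
    (a / x ^ 2) * ((a / α) ^ (h - 1) * (a / (x * α)) ^ (h - 1) * (a * y / x) ^ (2 * d - 1)) =
    (α ^ (2 - 2 * h) * a ^ (2 * h + 2 * d - 2)) *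
      (x ^ ((1 - h - 2 * d) - 1) * y ^ (2 * d - 1)) := by
  have := pointwise_identity d h (Real.log a) (Real.log α) (Real.log x) (Real.log y)
  simpa only [Real.exp_log ha, Real.exp_log hα, Real.exp_log hx, Real.exp_log hy] using this

lemma image_eq {a α : ℝ} (ha : 0 < a) :
    (fun x : ℝ => a / x - α) '' Ioo 0 1 = Ioi (a - α) := by
  ext v
  simp only [mem_image, mem_Ioo, mem_Ioi]
  constructor
  · rintro ⟨x, ⟨h0, h1⟩, rfl⟩
    have : a < a / x := by rw [lt_div_iff₀ h0]; nlinarith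
    linarith
  · intro hv
    have hva : 0 < v + α := by linarith
    refine ⟨a / (v + α), ⟨by positivity, ?_⟩, ?_⟩
    · rw [div_lt_one hva]; linarith
    · field_simp; ring

lemma inner_lintegral (d h α u : ℝ) (hd0 : 0 < d) (hd2 : d < 1 / 2)
    (hh0 : 0 < h) (hh : h < 1 / 2 - d) (hα : 0 < α) (hu : 0 < u) :
    ∫⁻ v in Ioi u, ENNReal.ofReal
      ((1 + u / α) ^ (h - 1) * (1 + v / α) ^ (h - 1) * |u - v| ^ (2 * d - 1)) =
    ENNReal.ofReal (ProbabilityTheory.beta (1 - h - 2 * d) (2 * d) * α ^ (2 - 2 * h)) *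
      ENNReal.ofReal ((u + α) ^ (2 * h + 2 * d - 2)) := by
  have ha : 0 < u + α := by linarith
  have hp : 0 < 1 - h - 2 * d := by linarith
  have hb := ProbabilityTheory.beta_pos hp (by linarith : 0 < 2 * d)
  have him := image_eq (α := α) ha
  rw [add_sub_cancel_right] at him
  rw [← him, lintegral_image_eq_lintegral_abs_deriv_mul (f' := fun x => -(u + α) / x ^ 2)
    measurableSet_Ioo]
  · have key : ∀ x ∈ Ioo (0 : ℝ) 1, ENNReal.ofReal |-(u + α) / x ^ 2| * ENNReal.ofReal
        ((1 + u / α) ^ (h - 1) * (1 + ((u + α) / x - α) / α) ^ (h - 1) *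
          |u - ((u + α) / x - α)| ^ (2 * d - 1)) =
        ENNReal.ofReal (α ^ (2 - 2 * h) * (u + α) ^ (2 * h + 2 * d - 2)) *
        ENNReal.ofReal (x ^ ((1 - h - 2 * d) - 1) * (1 - x) ^ (2 * d - 1)) := by
      rintro x ⟨h0, h1⟩
      have hy : 0 < 1 - x := by linarith
      rw [← ENNReal.ofReal_mul (abs_nonneg _), ← ENNReal.ofReal_mul (by positivity),
        ← pointwise_identity' d h ha hα h0 hy]
      have e1 : |-(u + α) / x ^ 2| = (u + α) / x ^ 2 := by
        rw [neg_div, abs_neg, abs_of_pos (by positivity)]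
      have e2 : 1 + u / α = (u + α) / α := by field_simp; ring
      have e3 : 1 + ((u + α) / x - α) / α = (u + α) / (x * α) := by field_simp; ring
      have e4 : |u - ((u + α) / x - α)| = (u + α) * (1 - x) / x := by
        have : u - ((u + α) / x - α) = -((u + α) * (1 - x) / x) := by field_simp; ring
        rw [this, abs_neg, abs_of_pos (by positivity)]
      rw [e1, e2, e3, e4]
    rw [setLIntegral_congr_fun measurableSet_Ioo key,
      lintegral_const_mul' _ _ ENNReal.ofReal_ne_top,
      beta_lintegral hp (by linarith), ← ENNReal.ofReal_mul (by positivity),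
      ← ENNReal.ofReal_mul (by positivity)]
    congr 1
    ring
  · intro x hx
    have hx0 : x ≠ 0 := hx.1.ne'
    have := (((hasDerivAt_inv hx0).const_mul (u + α)).sub_const α).hasDerivWithinAt (s := Ioo 0 1)
    refine (this.congr_deriv ?_).congr_of_mem ?_ hx
    · field_simp
    · intro y _; simp [div_eq_mul_inv]
  · intro x hx y hy hxy
    have hx0 : x ≠ 0 := hx.1.ne'
    have hy0 : y ≠ 0 := hy.1.ne'
    simp only [sub_left_inj] at hxy
    rw [div_eq_div_iff hx0 hy0] at hxy
    exact (mul_left_cancel₀ ha.ne' hxy).symm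

lemma outer_lintegral {a α : ℝ} (ha : a < -1) (hα : 0 < α) :
    ∫⁻ u in Ioi (0 : ℝ), ENNReal.ofReal ((u + α) ^ a) =
      ENNReal.ofReal (-α ^ (a + 1) / (a + 1)) := by
  have h1 := integral_Ioi_rpow_of_lt ha hα
  have h2 := integrableOn_Ioi_rpow_of_lt ha hα
  rw [← h1, ofReal_integral_eq_lintegral_ofReal h2]
  · have := (measurePreserving_add_right (volume : Measure ℝ) α).setLIntegral_comp_preimage_emb
      (measurableEmbedding_addRight α) (fun t => ENNReal.ofReal (t ^ a)) (Ioi α)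
    simpa using this
  · filter_upwards [self_mem_ae_restrict measurableSet_Ioi] with x hx
    exact rpow_nonneg (hα.trans hx).le _

lemma symm_lintegral (F : ℝ × ℝ → ENNReal) (hF : Measurable F) (hs : ∀ u v, F (u, v) = F (v, u)) :
    ∫⁻ u in Ioi (0 : ℝ), ∫⁻ v in Ioi (0 : ℝ), F (u, v) =
      2 * ∫⁻ u in Ioi (0 : ℝ), ∫⁻ v in Ioi u, F (u, v) := by
  let G : ℝ × ℝ → ENNReal := {p : ℝ × ℝ | p.1 < p.2}.indicator F
  have hG : Measurable G := hF.indicator (measurableSet_lt measurable_fst measurable_snd)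
  have hGm : ∀ u, Measurable fun v => G (u, v) := fun u => hG.comp measurable_prodMk_left
  have h1 : ∀ u ∈ Ioi (0 : ℝ), ∫⁻ v in Ioi u, F (u, v) = ∫⁻ v in Ioi (0 : ℝ), G (u, v) := by
    intro u hu
    have : (fun v => G (u, v)) = (Ioi u).indicator fun v => F (u, v) := by
      ext v; simp [G, indicator]
    rw [this, setLIntegral_indicator measurableSet_Ioi,
      inter_eq_left.2 (Ioi_subset_Ioi (le_of_lt hu))]
  have h2 : ∀ u ∈ Ioi (0 : ℝ), ∫⁻ v in Ioi (0 : ℝ), F (u, v) =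
      (∫⁻ v in Ioi (0 : ℝ), G (u, v)) + ∫⁻ v in Ioi (0 : ℝ), G (v, u) := by
    intro u hu
    rw [← lintegral_add_left (hGm u)]
    apply lintegral_congr_ae
    have hne : ∀ᵐ v : ℝ, v ≠ u := by
      simp [ae_iff]
    filter_upwards [ae_restrict_of_ae hne] with v hv
    rcases lt_or_gt_of_ne hv with hlt | hlt
    · simp [G, indicator, hlt, hlt.le, not_lt.2 hlt.le, hs u v]
    · simp [G, indicator, hlt, hlt.le, not_lt.2 hlt.le]
  rw [setLIntegral_congr_fun measurableSet_Ioi h1, setLIntegral_congr_fun measurableSet_Ioi h2,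
    lintegral_add_left hG.lintegral_prod_right', two_mul]
  congr 1
  exact lintegral_lintegral_swap (hG.comp measurable_swap).aemeasurable

/-- for `d ∈ (0,1/2)`, `0 < h < 1/2 − d` and `α > 0`, the function
`(u,v) ↦ (1+u/α)^{h−1}(1+v/α)^{h−1}|u−v|^{2d−1}` is integrable on `(0,∞)²` and its integral
equals `2 α^{2d+1} B(1−h−2d, 2d) / (1 − 2(h+d))`, where `B(x,y) = Γ(x)Γ(y)/Γ(x+y)` is the
Beta function. -/
theorem gamma_mixed_flou_second_moment (d h α : ℝ) (hd0 : 0 < d) (hd2 : d < 1 / 2)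
    (hh0 : 0 < h) (hh : h < 1 / 2 - d) (hα : 0 < α) :
    IntegrableOn (fun p : ℝ × ℝ =>
        (1 + p.1 / α) ^ (h - 1) * (1 + p.2 / α) ^ (h - 1) * |p.1 - p.2| ^ (2 * d - 1))
      (Ioi (0 : ℝ) ×ˢ Ioi (0 : ℝ)) ∧
    ∫ u in Ioi (0 : ℝ), ∫ v in Ioi (0 : ℝ),
        (1 + u / α) ^ (h - 1) * (1 + v / α) ^ (h - 1) * |u - v| ^ (2 * d - 1) =
      2 * α ^ (2 * d + 1) *
          (Real.Gamma (1 - h - 2 * d) * Real.Gamma (2 * d) /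
            Real.Gamma ((1 - h - 2 * d) + 2 * d)) / (1 - 2 * (h + d)) := by
  set f : ℝ × ℝ → ℝ := fun p =>
    (1 + p.1 / α) ^ (h - 1) * (1 + p.2 / α) ^ (h - 1) * |p.1 - p.2| ^ (2 * d - 1) with hf
  have hfm : Measurable f := by fun_prop
  have hp : 0 < 1 - h - 2 * d := by linarith
  have hb := ProbabilityTheory.beta_pos hp (by linarith : 0 < 2 * d)
  have hden : 0 < 1 - 2 * (h + d) := by linarith
  have hnn : 0 ≤ᵐ[volume.restrict (Ioi (0 : ℝ) ×ˢ Ioi (0 : ℝ))] f := by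
    filter_upwards [self_mem_ae_restrict (measurableSet_Ioi.prod measurableSet_Ioi)] with p hp
    have h1 : 0 < p.1 := hp.1
    have h2 : 0 < p.2 := hp.2
    simp only [hf, Pi.zero_apply]
    positivity
  have hL : ∫⁻ p in Ioi (0 : ℝ) ×ˢ Ioi (0 : ℝ), ENNReal.ofReal (f p) =
      ENNReal.ofReal (2 * α ^ (2 * d + 1) *
          ProbabilityTheory.beta (1 - h - 2 * d) (2 * d) / (1 - 2 * (h + d))) := by
    rw [Measure.volume_eq_prod, ← Measure.prod_restrict,
      lintegral_prod _ hfm.ennreal_ofReal.aemeasurable,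
      symm_lintegral (fun p => ENNReal.ofReal (f p)) hfm.ennreal_ofReal]
    · rw [setLIntegral_congr_fun measurableSet_Ioi
        (fun u hu => inner_lintegral d h α u hd0 hd2 hh0 hh hα hu),
        lintegral_const_mul' _ _ ENNReal.ofReal_ne_top, outer_lintegral (by linarith) hα,
        ← ENNReal.ofReal_mul (by positivity), ← ENNReal.ofReal_ofNat,
        ← ENNReal.ofReal_mul (by norm_num)]
      congr 1
      have e : α ^ (2 * d + 1) = α ^ (2 - 2 * h) * α ^ (2 * h + 2 * d - 2 + 1) := by
        rw [← rpow_add hα]; congr 1; ring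
      have e2 : 2 * h + 2 * d - 2 + 1 = -(1 - 2 * (h + d)) := by ring
      rw [e, e2, neg_div_neg_eq]
      ring
    · intro u v
      simp only [hf]
      rw [abs_sub_comm]
      congr 1
      ring
  have hint : IntegrableOn f (Ioi (0 : ℝ) ×ˢ Ioi (0 : ℝ)) := by
    refine ⟨hfm.aestronglyMeasurable, ?_⟩
    rw [hasFiniteIntegral_iff_ofReal hnn, hL]
    exact ENNReal.ofReal_lt_top
  refine ⟨hint, ?_⟩
  have h3 := setIntegral_prod f (μ := (volume : Measure ℝ)) (ν := (volume : Measure ℝ))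
    (by simpa [Measure.volume_eq_prod] using hint)
  rw [← Measure.volume_eq_prod] at h3
  have h4 := integral_eq_lintegral_of_nonneg_ae hnn hfm.aestronglyMeasurable
  rw [hL, ENNReal.toReal_ofReal (by positivity), h3] at h4
  exact h4
end

section
/- Let d ∈ (0,1/2), let λ₁ < 0 and λ₂ < 0 be real numbers, and let T > 0. Then (1 − e^{λ₁ T})(1 − e^{λ₂ T}) ∫_0^∞ ∫_0^∞ e^{λ₁ u + λ₂ v} |u − v|^{2d−1} du dv ≤ T² Γ(2d) (−λ₁)(−λ₂) ((−λ₁)^{−2d} + (−λ₂)^{−2d}) / ((−λ₁) + (−λ₂)). -/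
open MeasureTheory Real Set

/-- One half of the double integral (the region `u > v`), as a Lebesgue integral. -/
lemma half_lintegral (s a b : ℝ) (hs : 0 < s) (ha : 0 < a) (hb : 0 < b) :
    ∫⁻ v in Ioi (0 : ℝ), ∫⁻ u in Ioi (0 : ℝ), (Ioi v).indicator
      (fun u => ENNReal.ofReal (Real.exp (-a * u + -b * v) * |u - v| ^ (s - 1))) u
    = ENNReal.ofReal (Real.Gamma s * a ^ (-s) / (a + b)) := by
  have hG : ∫⁻ t in Ioi (0 : ℝ), ENNReal.ofReal (t ^ (s - 1) * Real.exp (-(a * t)))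
      = ENNReal.ofReal (Real.Gamma s * a ^ (-s)) := by
    have h1 := Real.integral_rpow_mul_exp_neg_mul_Ioi hs ha
    have hpos : 0 < (1 / a) ^ s * Real.Gamma s :=
      mul_pos (Real.rpow_pos_of_pos (by positivity) _) (Real.Gamma_pos_of_pos hs)
    have hint : IntegrableOn (fun t : ℝ => t ^ (s - 1) * Real.exp (-(a * t))) (Ioi 0) := by
      by_contra hc
      rw [integral_undef hc] at h1
      linarith
    rw [← ofReal_integral_eq_lintegral_ofReal hint, h1]
    · congr 1
      rw [Real.rpow_neg ha.le, one_div, Real.inv_rpow ha.le, mul_comm]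
    · filter_upwards [ae_restrict_mem measurableSet_Ioi] with t ht
      have : (0 : ℝ) < t := ht
      simp only [Pi.zero_apply]
      positivity
  have hE : ∫⁻ t in Ioi (0 : ℝ), ENNReal.ofReal (Real.exp (-(a + b) * t))
      = ENNReal.ofReal (1 / (a + b)) := by
    have hint := integrableOn_exp_mul_Ioi (a := -(a + b)) (by linarith) 0
    rw [← ofReal_integral_eq_lintegral_ofReal hint, integral_exp_mul_Ioi (by linarith)]
    · congr 1
      rw [mul_zero, Real.exp_zero, neg_div_neg_eq]
    · exact Filter.Eventually.of_forall fun t => (Real.exp_pos _).le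
  have hinner : ∀ v ∈ Ioi (0 : ℝ), ∫⁻ u in Ioi (0 : ℝ), (Ioi v).indicator
      (fun u => ENNReal.ofReal (Real.exp (-a * u + -b * v) * |u - v| ^ (s - 1))) u
      = ENNReal.ofReal (Real.exp (-(a + b) * v)) * ENNReal.ofReal (Real.Gamma s * a ^ (-s)) := by
    intro v hv
    have hv : (0 : ℝ) < v := hv
    rw [← hG, ← lintegral_const_mul _ (by fun_prop), ← lintegral_indicator measurableSet_Ioi,
      ← lintegral_indicator measurableSet_Ioi, ← lintegral_add_right_eq_self _ v]
    congr 1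
    ext w
    by_cases hw : 0 < w
    · have h1 : w + v ∈ Ioi (0 : ℝ) := by simp only [mem_Ioi]; linarith
      have h2 : w + v ∈ Ioi v := by simp only [mem_Ioi]; linarith
      have h3 : w ∈ Ioi (0 : ℝ) := hw
      rw [indicator_of_mem h1, indicator_of_mem h2, indicator_of_mem h3,
        ← ENNReal.ofReal_mul (Real.exp_pos _).le]
      congr 1
      rw [add_sub_cancel_right, abs_of_pos hw, mul_comm (w ^ (s - 1)), ← mul_assoc, ← Real.exp_add]
      congr 2
      ring
    · have h2 : w + v ∉ Ioi v := by simp only [mem_Ioi]; linarith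
      have h3 : w ∉ Ioi (0 : ℝ) := hw
      rw [indicator_of_notMem h3]
      by_cases h1 : w + v ∈ Ioi (0 : ℝ)
      · rw [indicator_of_mem h1, indicator_of_notMem h2]
      · rw [indicator_of_notMem h1]
  rw [setLIntegral_congr_fun measurableSet_Ioi hinner, lintegral_mul_const _ (by fun_prop), hE,
    ← ENNReal.ofReal_mul (by positivity)]
  congr 1
  ring

lemma double_integral_le (s a b : ℝ) (hs : 0 < s) (hs1 : s < 1) (ha : 0 < a) (hb : 0 < b) :
    ∫ v in Ioi (0 : ℝ), ∫ u in Ioi (0 : ℝ), Real.exp (-a * u + -b * v) * |u - v| ^ (s - 1)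
      ≤ Real.Gamma s * (a ^ (-s) + b ^ (-s)) / (a + b) := by
  have hΓ := Real.Gamma_pos_of_pos hs
  have hA := Real.rpow_pos_of_pos ha (-s)
  have hB := Real.rpow_pos_of_pos hb (-s)
  set F : ℝ → ℝ → ENNReal := fun v u =>
    ENNReal.ofReal (Real.exp (-a * u + -b * v) * |u - v| ^ (s - 1)) with hF
  have hFm : Measurable (Function.uncurry F) := by
    simp only [hF, Function.uncurry_def]
    fun_prop
  have hm1 : Measurable (fun p : ℝ × ℝ => (Ioi p.1).indicator (F p.1) p.2) := by
    have : (fun p : ℝ × ℝ => (Ioi p.1).indicator (F p.1) p.2)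
        = {p : ℝ × ℝ | p.1 < p.2}.indicator (Function.uncurry F) := by
      ext p; simp [indicator, Function.uncurry]
    rw [this]
    exact hFm.indicator (measurableSet_lt measurable_fst measurable_snd)
  have hm2 : Measurable (fun p : ℝ × ℝ => (Iio p.1).indicator (F p.1) p.2) := by
    have : (fun p : ℝ × ℝ => (Iio p.1).indicator (F p.1) p.2)
        = {p : ℝ × ℝ | p.2 < p.1}.indicator (Function.uncurry F) := by
      ext p; simp [indicator, Function.uncurry]
    rw [this]
    exact hFm.indicator (measurableSet_lt measurable_snd measurable_fst)
  have h2 : ∫⁻ v in Ioi (0 : ℝ), ∫⁻ u in Ioi (0 : ℝ), (Iio v).indicator (F v) u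
      = ENNReal.ofReal (Real.Gamma s * b ^ (-s) / (b + a)) := by
    rw [← half_lintegral s b a hs hb ha, lintegral_lintegral_swap hm2.aemeasurable]
    congr 1
    ext u
    congr 1
    ext v
    simp only [indicator, mem_Iio, mem_Ioi, hF]
    rw [abs_sub_comm, add_comm]
  have hpt : ∀ v u, F v u ≤ (Ioi v).indicator (F v) u + (Iio v).indicator (F v) u := by
    intro v u
    rcases lt_trichotomy u v with h | h | h
    · simp [indicator, h]
    · subst h
      simp [hF, Real.zero_rpow (by linarith : s - 1 ≠ 0)]
    · simp [indicator, h]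
  have hL : ∫⁻ v in Ioi (0 : ℝ), ∫⁻ u in Ioi (0 : ℝ), F v u
      ≤ ENNReal.ofReal (Real.Gamma s * (a ^ (-s) + b ^ (-s)) / (a + b)) := by
    calc _ ≤ ∫⁻ v in Ioi (0 : ℝ), ∫⁻ u in Ioi (0 : ℝ),
          ((Ioi v).indicator (F v) u + (Iio v).indicator (F v) u) :=
          lintegral_mono fun v => lintegral_mono fun u => hpt v u
      _ = ∫⁻ v in Ioi (0 : ℝ), ((∫⁻ u in Ioi (0 : ℝ), (Ioi v).indicator (F v) u)
            + ∫⁻ u in Ioi (0 : ℝ), (Iio v).indicator (F v) u) := by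
          congr 1
          ext v
          exact lintegral_add_left (hm1.comp measurable_prodMk_left) _
      _ = _ := by
          rw [lintegral_add_left hm1.lintegral_prod_right', h2,
            half_lintegral s a b hs ha hb, ← ENNReal.ofReal_add (by positivity) (by positivity)]
          congr 1
          rw [add_comm b a]
          ring
  rw [← ENNReal.ofReal_le_ofReal_iff (by positivity)]
  refine le_trans ?_ hL
  refine (Real.ofReal_le_enorm _).trans ((enorm_integral_le_lintegral_enorm _).trans ?_)
  refine lintegral_mono fun v => (enorm_integral_le_lintegral_enorm _).trans ?_
  refine lintegral_mono fun u => ?_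
  simp only [hF]
  rw [Real.enorm_of_nonneg (by positivity)]


/-- deterministic estimate for the tightness term `I₁`: for `d ∈ (0,1/2)`,
`λ₁, λ₂ < 0` and `T > 0`,
`(1−e^{λ₁T})(1−e^{λ₂T}) ∫_0^∞∫_0^∞ e^{λ₁u+λ₂v}|u−v|^{2d−1} du dv
  ≤ T² Γ(2d) (−λ₁)(−λ₂)((−λ₁)^{−2d} + (−λ₂)^{−2d}) / ((−λ₁)+(−λ₂))`. -/
theorem tightness_I1_bound (d l₁ l₂ T : ℝ) (hd0 : 0 < d) (hd2 : d < 1 / 2)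
    (hl₁ : l₁ < 0) (hl₂ : l₂ < 0) (hT : 0 < T) :
    (1 - Real.exp (l₁ * T)) * (1 - Real.exp (l₂ * T)) *
        ∫ v in Ioi (0 : ℝ), ∫ u in Ioi (0 : ℝ),
          Real.exp (l₁ * u + l₂ * v) * |u - v| ^ (2 * d - 1) ≤
      T ^ 2 * Real.Gamma (2 * d) * (-l₁) * (-l₂) *
          ((-l₁) ^ (-(2 * d)) + (-l₂) ^ (-(2 * d))) / ((-l₁) + (-l₂)) := by

  have hJ := double_integral_le (2 * d) (-l₁) (-l₂) (by linarith) (by linarith)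
    (by linarith) (by linarith)
  simp only [neg_neg] at hJ
  have e1 : 1 - Real.exp (l₁ * T) ≤ -l₁ * T := by linarith [Real.add_one_le_exp (l₁ * T)]
  have e2 : 1 - Real.exp (l₂ * T) ≤ -l₂ * T := by linarith [Real.add_one_le_exp (l₂ * T)]
  have p2 : 0 ≤ 1 - Real.exp (l₂ * T) := by
    linarith [Real.exp_le_one_iff.2 (mul_nonpos_of_nonpos_of_nonneg hl₂.le hT.le)]
  have q1 : 0 ≤ -l₁ * T := mul_nonneg (by linarith) hT.le
  have q2 : 0 ≤ -l₂ * T := mul_nonneg (by linarith) hT.le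
  have hJ0 : 0 ≤ ∫ v in Ioi (0 : ℝ), ∫ u in Ioi (0 : ℝ),
          Real.exp (l₁ * u + l₂ * v) * |u - v| ^ (2 * d - 1) :=
    integral_nonneg fun v => integral_nonneg fun u => by positivity
  refine (mul_le_mul (mul_le_mul e1 e2 p2 q1) hJ hJ0 (mul_nonneg q1 q2)).trans (le_of_eq ?_)
  ring
end

section
/- Let d ∈ (0,1/2), h ∈ (0, 1/2 − d), and α > 0. Then lim_{t→∞} t^{1−2h−2d} ∫_{−∞}^0 ∫_{−∞}^t (α + t − u)^{h−1} (α − v)^{h−1} |u − v|^{2d−1} du dv = ∫_{−∞}^0 ∫_{−∞}^1 (1 − y)^{h−1} (−x)^{h−1} |x − y|^{2d−1} dy dx. -/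
open MeasureTheory Real Set Filter Topology

lemma aux_abs_int (p r : ℝ) (hp : -1 < p) (hr : 0 < r) :
    IntegrableOn (fun s : ℝ => |s - r| ^ p) (Ioc (r / 2) (2 * r)) := by
  have h1 : IntervalIntegrable (fun s : ℝ => s ^ p) volume 0 r :=
    intervalIntegral.intervalIntegrable_rpow' hp
  have h2 : IntervalIntegrable (fun s : ℝ => (s - r) ^ p) volume (0 + r) (r + r) :=
    h1.comp_sub_right r
  have h3 : IntervalIntegrable (fun s : ℝ => (r - s) ^ p) volume (r - 0) (r - r) :=
    h1.comp_sub_left r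
  have h3' := h3.symm
  rw [intervalIntegrable_iff_integrableOn_Ioc_of_le (by linarith)] at h2 h3'
  have e2 : IntegrableOn (fun s : ℝ => |s - r| ^ p) (Ioc (0 + r) (r + r)) := by
    refine h2.congr_fun (fun s hs => ?_) measurableSet_Ioc
    have : 0 ≤ s - r := by linarith [hs.1]
    simp only [abs_of_nonneg this]
  have e3 : IntegrableOn (fun s : ℝ => |s - r| ^ p) (Ioc (r - r) (r - 0)) := by
    refine h3'.congr_fun (fun s hs => ?_) measurableSet_Ioc
    have : s - r ≤ 0 := by linarith [hs.2]
    simp only [abs_of_nonpos this, neg_sub]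
  refine (e3.union e2).mono_set (fun s hs => ?_)
  rcases le_total s r with h | h
  · left; constructor <;> linarith [hs.1, hs.2]
  · rcases eq_or_lt_of_le h with h' | h'
    · left; constructor <;> linarith [hs.1, hs.2]
    · right; constructor <;> linarith [hs.1, hs.2]

lemma aux_inner_int (d h r : ℝ) (hd0 : 0 < d) (hd2 : d < 1 / 2)
    (hh0 : 0 < h) (hh : h < 1 / 2 - d) (hr : 0 < r) :
    IntegrableOn (fun s : ℝ => s ^ (h - 1) * |s - r| ^ (2 * d - 1)) (Ioi 0) := by
  have hm : Measurable (fun s : ℝ => s ^ (h - 1) * |s - r| ^ (2 * d - 1)) := by fun_prop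
  have i1 : IntegrableOn (fun s : ℝ => s ^ (h - 1) * |s - r| ^ (2 * d - 1)) (Ioc 0 (r / 2)) := by
    have g : IntegrableOn (fun s : ℝ => s ^ (h - 1)) (Ioc 0 (r / 2)) := by
      rw [← intervalIntegrable_iff_integrableOn_Ioc_of_le (by linarith)]
      exact intervalIntegral.intervalIntegrable_rpow' (by linarith)
    refine Integrable.mono' (g.mul_const ((r / 2) ^ (2 * d - 1))) hm.aestronglyMeasurable ?_
    refine (ae_restrict_iff' measurableSet_Ioc).2 (Eventually.of_forall fun s hs => ?_)
    have hs0 := hs.1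
    rw [Real.norm_of_nonneg (by positivity)]
    refine mul_le_mul_of_nonneg_left ?_ (by positivity)
    refine Real.rpow_le_rpow_of_nonpos (by linarith) ?_ (by linarith)
    rw [abs_sub_comm]
    exact le_trans (by linarith [hs.2]) (le_abs_self _)
  have i2 : IntegrableOn (fun s : ℝ => s ^ (h - 1) * |s - r| ^ (2 * d - 1))
      (Ioc (r / 2) (2 * r)) := by
    refine Integrable.mono' ((aux_abs_int (2 * d - 1) r (by linarith) hr).const_mul
      ((r / 2) ^ (h - 1))) hm.aestronglyMeasurable ?_
    refine (ae_restrict_iff' measurableSet_Ioc).2 (Eventually.of_forall fun s hs => ?_)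
    have hs0 : 0 < s := by linarith [hs.1]
    rw [Real.norm_of_nonneg (by positivity)]
    refine mul_le_mul_of_nonneg_right ?_ (by positivity)
    exact Real.rpow_le_rpow_of_nonpos (by linarith) hs.1.le (by linarith)
  have i3 : IntegrableOn (fun s : ℝ => s ^ (h - 1) * |s - r| ^ (2 * d - 1)) (Ioi (2 * r)) := by
    have g : IntegrableOn (fun s : ℝ => s ^ (h + 2 * d - 2)) (Ioi (2 * r)) :=
      integrableOn_Ioi_rpow_of_lt (by linarith) (by linarith)
    refine Integrable.mono' (g.mul_const ((1 / 2) ^ (2 * d - 1))) hm.aestronglyMeasurable ?_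
    refine (ae_restrict_iff' measurableSet_Ioi).2 (Eventually.of_forall fun s hs => ?_)
    have hs1 : 2 * r < s := hs
    have hs0 : 0 < s := by linarith
    rw [Real.norm_of_nonneg (by positivity)]
    have : |s - r| ^ (2 * d - 1) ≤ (s * (1 / 2)) ^ (2 * d - 1) := by
      refine Real.rpow_le_rpow_of_nonpos (by linarith) ?_ (by linarith)
      exact le_trans (by linarith) (le_abs_self _)
    calc _ ≤ s ^ (h - 1) * (s * (1 / 2)) ^ (2 * d - 1) := by gcongr
      _ = _ := by
        rw [Real.mul_rpow hs0.le (by norm_num), ← mul_assoc, ← Real.rpow_add hs0]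
        ring_nf
  refine ((i1.union i2).union i3).mono_set (fun s hs => ?_)
  have hs0 : 0 < s := hs
  by_cases a : s ≤ r / 2
  · exact Or.inl (Or.inl ⟨hs0, a⟩)
  by_cases b : s ≤ 2 * r
  · exact Or.inl (Or.inr ⟨not_le.1 a, b⟩)
  · exact Or.inr (not_le.1 b)

lemma aux_scale (d h r : ℝ) (hr : 0 < r) :
    ∫ s in Ioi (0 : ℝ), s ^ (h - 1) * |s - r| ^ (2 * d - 1) =
      r ^ (h + 2 * d - 1) * ∫ s in Ioi (0 : ℝ), s ^ (h - 1) * |s - 1| ^ (2 * d - 1) := by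
  have := integral_comp_mul_left_Ioi (fun s : ℝ => s ^ (h - 1) * |s - r| ^ (2 * d - 1)) 0 hr
  rw [mul_zero, smul_eq_mul, eq_comm, inv_mul_eq_iff_eq_mul₀ hr.ne'] at this
  rw [this, ← integral_const_mul, ← integral_const_mul]
  refine setIntegral_congr_fun measurableSet_Ioi (fun s hs => ?_)
  have hs0 : 0 < s := hs
  have e : r * s - r = r * (s - 1) := by ring
  simp only [e, abs_mul, abs_of_pos hr]
  rw [Real.mul_rpow hr.le hs0.le, Real.mul_rpow hr.le (abs_nonneg _)]
  have : r ^ (h + 2 * d - 1) = r * (r ^ (h - 1) * r ^ (2 * d - 1)) := by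
    nth_rewrite 2 [← Real.rpow_one r]
    simp only [← Real.rpow_add hr]
    ring_nf
  rw [this]; ring

lemma aux_refl (c : ℝ) (f : ℝ → ℝ) :
    ∫ y in Iio c, f (c - y) = ∫ s in Ioi (0 : ℝ), f s := by
  rw [← integral_indicator measurableSet_Iio, ← integral_indicator measurableSet_Ioi,
    ← integral_sub_left_eq_self _ volume c]
  congr 1; ext y
  by_cases hy : y < c <;> simp [indicator, hy]

lemma aux_refl_int (c : ℝ) (f : ℝ → ℝ) (hf : IntegrableOn f (Ioi 0)) :
    IntegrableOn (fun y => f (c - y)) (Iio c) := by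
  rw [← integrable_indicator_iff measurableSet_Ioi] at hf
  rw [← integrable_indicator_iff measurableSet_Iio]
  refine (hf.comp_sub_left c).congr (Eventually.of_forall fun y => ?_)
  by_cases hy : y < c <;> simp [indicator, hy]

lemma aux_outer_int (d h : ℝ) (hd0 : 0 < d) 
    (hh0 : 0 < h) (hh : h < 1 / 2 - d) :
    IntegrableOn (fun s : ℝ => s ^ (h - 1) * (1 + s) ^ (h + 2 * d - 1)) (Ioi 0) := by
  have hm : Measurable (fun s : ℝ => s ^ (h - 1) * (1 + s) ^ (h + 2 * d - 1)) := by fun_prop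
  rw [← Ioc_union_Ioi_eq_Ioi (zero_le_one (α := ℝ))]
  refine IntegrableOn.union ?_ ?_
  · have g : IntegrableOn (fun s : ℝ => s ^ (h - 1)) (Ioc 0 1) := by
      rw [← intervalIntegrable_iff_integrableOn_Ioc_of_le (by linarith)]
      exact intervalIntegral.intervalIntegrable_rpow' (by linarith)
    refine Integrable.mono' g hm.aestronglyMeasurable ?_
    refine (ae_restrict_iff' measurableSet_Ioc).2 (Eventually.of_forall fun s hs => ?_)
    have hs0 := hs.1
    rw [Real.norm_of_nonneg (by positivity)]
    refine mul_le_of_le_one_right (by positivity) ?_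
    exact Real.rpow_le_one_of_one_le_of_nonpos (by linarith) (by linarith)
  · have g : IntegrableOn (fun s : ℝ => s ^ (2 * h + 2 * d - 2)) (Ioi 1) :=
      integrableOn_Ioi_rpow_of_lt (by linarith) (by linarith)
    refine Integrable.mono' g hm.aestronglyMeasurable ?_
    refine (ae_restrict_iff' measurableSet_Ioi).2 (Eventually.of_forall fun s hs => ?_)
    have hs1 : 1 < s := hs
    have hs0 : 0 < s := by linarith
    rw [Real.norm_of_nonneg (by positivity)]
    calc _ ≤ s ^ (h - 1) * s ^ (h + 2 * d - 1) := by
          refine mul_le_mul_of_nonneg_left ?_ (by positivity)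
          exact Real.rpow_le_rpow_of_nonpos hs0 (by linarith) (by linarith)
      _ = _ := by
        rw [← Real.rpow_add hs0]; ring_nf

lemma aux_scale_Iio (f : ℝ → ℝ) (c t : ℝ) (ht : 0 < t) :
    ∫ u in Iio (t * c), f u = t * ∫ y in Iio c, f (t * y) := by
  rw [← integral_indicator measurableSet_Iio, ← integral_indicator measurableSet_Iio]
  have := Measure.integral_comp_mul_left ((Iio (t * c)).indicator f) t
  rw [abs_of_pos (inv_pos.2 ht), smul_eq_mul, eq_comm, inv_mul_eq_iff_eq_mul₀ ht.ne'] at this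
  rw [this]
  congr 2; ext y
  by_cases hy : y < c <;> simp [indicator, hy, ht]

/-- the rescaled integrand -/
noncomputable def auxF (d h a x y : ℝ) : ℝ :=
  (a + 1 - y) ^ (h - 1) * (a - x) ^ (h - 1) * |x - y| ^ (2 * d - 1)

lemma aux_rescale (d h α t : ℝ) (hα : 0 < α) (ht : 0 < t) :
    t ^ (1 - 2 * h - 2 * d) *
          ∫ v in Iio (0 : ℝ), ∫ u in Iio t,
            (α + t - u) ^ (h - 1) * (α - v) ^ (h - 1) * |u - v| ^ (2 * d - 1) =
    ∫ x in Iio (0 : ℝ), ∫ y in Iio (1 : ℝ), auxF d h (α / t) x y := by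
  have := aux_scale_Iio (fun v => ∫ u in Iio t,
            (α + t - u) ^ (h - 1) * (α - v) ^ (h - 1) * |u - v| ^ (2 * d - 1)) 0 t ht
  rw [mul_zero] at this
  rw [this, ← integral_const_mul, ← integral_const_mul]
  refine setIntegral_congr_fun measurableSet_Iio (fun x hx => ?_)
  have hx0 : x < 0 := hx
  have h2 := aux_scale_Iio (fun u => 
            (α + t - u) ^ (h - 1) * (α - t * x) ^ (h - 1) * |u - t * x| ^ (2 * d - 1)) 1 t ht
  rw [mul_one] at h2
  rw [h2, ← integral_const_mul, ← integral_const_mul, ← integral_const_mul]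
  refine setIntegral_congr_fun measurableSet_Iio (fun y hy => ?_)
  have hy1 : y < 1 := hy
  have ha : 0 < α / t := by positivity
  have e1 : α + t - t * y = t * (α / t + 1 - y) := by field_simp
  have e2 : α - t * x = t * (α / t - x) := by field_simp
  have e3 : t * y - t * x = t * (y - x) := by ring
  simp only [auxF]
  rw [e1, e2, e3, abs_mul, abs_of_pos ht, Real.mul_rpow ht.le (by linarith),
    Real.mul_rpow ht.le (by linarith), Real.mul_rpow ht.le (abs_nonneg _), abs_sub_comm x y]
  have : t ^ (1 - 2 * h - 2 * d) * (t ^ (1:ℝ) * (t ^ (1:ℝ) * 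
      (t ^ (h - 1) * (t ^ (h - 1) * t ^ (2 * d - 1))))) = 1 := by
    simp only [← Real.rpow_add ht]
    ring_nf
    simp
  rw [Real.rpow_one] at this
  linear_combination ((α / t + 1 - y) ^ (h - 1) * (α / t - x) ^ (h - 1) *
    |y - x| ^ (2 * d - 1)) * this

lemma auxF_nonneg (d h a x y : ℝ) (ha : 0 ≤ a) (hx : x < 0) (hy : y < 1) :
    0 ≤ auxF d h a x y := by
  have h1 : 0 < a + 1 - y := by linarith
  have h2 : 0 < a - x := by linarith
  unfold auxF; positivity

lemma auxF_le (d h a x y : ℝ) (hh : h < 1) (ha : 0 ≤ a) (hx : x < 0) (hy : y < 1) :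
    auxF d h a x y ≤ auxF d h 0 x y := by
  have h1 : 0 < a + 1 - y := by linarith
  have h2 : 0 < a - x := by linarith
  unfold auxF
  refine mul_le_mul_of_nonneg_right ?_ (by positivity)
  refine mul_le_mul ?_ ?_ (by positivity) ?_
  · exact Real.rpow_le_rpow_of_nonpos (by linarith) (by linarith) (by linarith)
  · exact Real.rpow_le_rpow_of_nonpos (by linarith) (by linarith) (by linarith)
  · exact Real.rpow_nonneg (by linarith) _

lemma auxF_tendsto (d h x y : ℝ) (hx : x < 0) (hy : y < 1) :
    Tendsto (fun a => auxF d h a x y) (𝓝[>] 0) (𝓝 (auxF d h 0 x y)) := by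
  refine Tendsto.mono_left (ContinuousAt.tendsto ?_) nhdsWithin_le_nhds
  unfold auxF
  refine ContinuousAt.mul (ContinuousAt.mul ?_ ?_) continuousAt_const
  · exact ContinuousAt.rpow_const (by fun_prop) (Or.inl (by linarith))
  · exact ContinuousAt.rpow_const (by fun_prop) (Or.inl (by linarith))

lemma auxF_meas (d h a : ℝ) : Measurable (fun p : ℝ × ℝ => auxF d h a p.1 p.2) := by
  unfold auxF; fun_prop

lemma auxF_inner_int (d h x : ℝ) (hd0 : 0 < d) (hd2 : d < 1 / 2)
    (hh0 : 0 < h) (hh : h < 1 / 2 - d) (hx : x < 0) :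
    IntegrableOn (fun y => auxF d h 0 x y) (Iio 1) := by
  have := aux_refl_int 1 _ (aux_inner_int d h (1 - x) hd0 hd2 hh0 hh (by linarith))
  refine (this.const_mul ((-x) ^ (h - 1))).congr (Eventually.of_forall fun y => ?_)
  have e : 1 - y - (1 - x) = x - y := by ring
  simp only [auxF, e, zero_add, zero_sub]
  ring

lemma auxF_inner_eq (d h x : ℝ) (hx : x < 0) :
    ∫ y in Iio (1 : ℝ), auxF d h 0 x y = (-x) ^ (h - 1) * ((1 - x) ^ (h + 2 * d - 1) *
      ∫ s in Ioi (0 : ℝ), s ^ (h - 1) * |s - 1| ^ (2 * d - 1)) := by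
  rw [← aux_scale d h (1 - x) (by linarith), ← aux_refl 1, ← integral_const_mul]
  congr 1; ext y
  have e : 1 - y - (1 - x) = x - y := by ring
  simp only [auxF, e, zero_add, zero_sub]
  ring

lemma auxF_outer_int (d h : ℝ) (hd0 : 0 < d) (hh0 : 0 < h) (hh : h < 1 / 2 - d) :
    IntegrableOn (fun x => ∫ y in Iio (1 : ℝ), auxF d h 0 x y) (Iio 0) := by
  have := aux_refl_int 0 _ (aux_outer_int d h hd0 hh0 hh)
  refine IntegrableOn.congr_fun (this.mul_const
    (∫ s in Ioi (0 : ℝ), s ^ (h - 1) * |s - 1| ^ (2 * d - 1))) (fun x hx => ?_) measurableSet_Iio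
  simp only [auxF_inner_eq d h x hx, zero_sub, ← sub_eq_add_neg]
  ring

theorem gamma_mixed_flou_covariance_asymptotics (d h α : ℝ) (hd0 : 0 < d) (hd2 : d < 1 / 2)
    (hh0 : 0 < h) (hh : h < 1 / 2 - d) (hα : 0 < α) :
    Tendsto (fun t : ℝ =>
        t ^ (1 - 2 * h - 2 * d) *
          ∫ v in Iio (0 : ℝ), ∫ u in Iio t,
            (α + t - u) ^ (h - 1) * (α - v) ^ (h - 1) * |u - v| ^ (2 * d - 1))
      atTop
      (𝓝 (∫ x in Iio (0 : ℝ), ∫ y in Iio (1 : ℝ),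
            (1 - y) ^ (h - 1) * (-x) ^ (h - 1) * |x - y| ^ (2 * d - 1))) := by
  have hlim : Tendsto (fun t : ℝ => α / t) atTop (𝓝[>] 0) := by
    refine tendsto_nhdsWithin_iff.2 ⟨tendsto_const_nhds.div_atTop tendsto_id, ?_⟩
    filter_upwards [eventually_gt_atTop 0] with t ht
    exact div_pos hα ht
  have key : Tendsto (fun a : ℝ => ∫ x in Iio (0 : ℝ), ∫ y in Iio (1 : ℝ), auxF d h a x y)
      (𝓝[>] 0) (𝓝 (∫ x in Iio (0 : ℝ), ∫ y in Iio (1 : ℝ), auxF d h 0 x y)) := by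
    have hpos : ∀ᶠ a : ℝ in 𝓝[>] 0, 0 < a := eventually_mem_nhdsWithin
    refine tendsto_integral_filter_of_dominated_convergence
      (fun x => ∫ y in Iio (1 : ℝ), auxF d h 0 x y) ?_ ?_ (auxF_outer_int d h hd0 hh0 hh) ?_
    · refine Eventually.of_forall fun a => ?_
      exact (auxF_meas d h a).stronglyMeasurable.integral_prod_right'.aestronglyMeasurable
    · filter_upwards [hpos] with a ha
      refine (ae_restrict_iff' measurableSet_Iio).2 (Eventually.of_forall fun x hx => ?_)
      have nn : ∀ᵐ y ∂(volume.restrict (Iio (1:ℝ))), 0 ≤ auxF d h a x y :=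
        (ae_restrict_iff' measurableSet_Iio).2
          (Eventually.of_forall fun y hy => auxF_nonneg d h a x y ha.le hx hy)
      rw [Real.norm_of_nonneg (integral_nonneg_of_ae nn)]
      refine integral_mono_of_nonneg nn (auxF_inner_int d h x hd0 hd2 hh0 hh hx) ?_
      exact (ae_restrict_iff' measurableSet_Iio).2
          (Eventually.of_forall fun y hy => auxF_le d h a x y (by linarith) ha.le hx hy)
    · refine (ae_restrict_iff' measurableSet_Iio).2 (Eventually.of_forall fun x hx => ?_)
      refine tendsto_integral_filter_of_dominated_convergence
        (fun y => auxF d h 0 x y) ?_ ?_ (auxF_inner_int d h x hd0 hd2 hh0 hh hx) ?_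
      · refine Eventually.of_forall fun a => ?_
        exact ((auxF_meas d h a).comp measurable_prodMk_left).aestronglyMeasurable
      · filter_upwards [hpos] with a ha
        refine (ae_restrict_iff' measurableSet_Iio).2 (Eventually.of_forall fun y hy => ?_)
        rw [Real.norm_of_nonneg (auxF_nonneg d h a x y ha.le hx hy)]
        exact auxF_le d h a x y (by linarith) ha.le hx hy
      · exact (ae_restrict_iff' measurableSet_Iio).2
          (Eventually.of_forall fun y hy => auxF_tendsto d h x y hx hy)
  have := key.comp hlim
  simp only [auxF, zero_add, zero_sub] at this
  refine this.congr' ?_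
  filter_upwards [eventually_gt_atTop 0] with t ht
  rw [aux_rescale d h α t hα ht]
  rfl
end

section
/- Let d ∈ (0,1/2), h ∈ (0, 1/2 − d), and t > 0. For α > 0 define F_α : ℝ → ℝ by F_α(u) = (α/(α + t − u))^{1−h} · 1_{(−∞,t)}(u) − (α/(α − u))^{1−h} · 1_{(−∞,0)}(u) − 1_{(0,t)}(u). Then lim_{α→∞} ∫_ℝ ∫_ℝ F_α(u) F_α(v) |u − v|^{2d−1} du dv = 0. -/
open MeasureTheory Real Set Filter Topology

/-- The kernel of the increment `Z^d(t) − Z^d(0) − L^d(t)` (STATEMENT 17):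
`F_α(u) = (α/(α+t−u))^{1−h} 1_{(−∞,t)}(u) − (α/(α−u))^{1−h} 1_{(−∞,0)}(u) − 1_{(0,t)}(u)`. -/
noncomputable def incrementKernel (h t α u : ℝ) : ℝ :=
  (Iio t).indicator (fun u => (α / (α + t - u)) ^ (1 - h)) u
    - (Iio (0 : ℝ)).indicator (fun u => (α / (α - u)) ^ (1 - h)) u
    - (Ioo (0 : ℝ) t).indicator 1 u

lemma kernel_bound (h t α u : ℝ) (hh0 : 0 < h) (hh : h < 1 / 2) (ht : 0 < t) (hα : t ≤ α)
    (hu : u ≠ 0) :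
    |incrementKernel h t α u| ≤ 4 * t / α * (1 + ‖u / α‖) ^ (-(2 - h)) := by
  have hα0 : 0 < α := ht.trans_le hα
  have key : ∀ x : ℝ, 0 < x → x ≤ 1 → 0 ≤ 1 - x ^ (1 - h) ∧ 1 - x ^ (1 - h) ≤ 1 - x := by
    intro x hx hx1
    have h1 : x ^ (1 - h) ≤ 1 := Real.rpow_le_one hx.le hx1 (by linarith)
    have h2 : x ^ (1 : ℝ) ≤ x ^ (1 - h) :=
      Real.rpow_le_rpow_of_exponent_ge hx hx1 (by linarith)
    rw [Real.rpow_one] at h2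
    constructor <;> linarith
  unfold incrementKernel
  rcases lt_or_gt_of_ne hu with hu | hu
  · have hut : u < t := hu.trans ht
    rw [indicator_of_mem (show u ∈ Iio t from hut), indicator_of_mem (show u ∈ Iio (0:ℝ) from hu),
      indicator_of_notMem (show u ∉ Ioo (0:ℝ) t from fun hx => absurd hx.1 (by linarith))]
    have hp1 : 0 < α - u := by linarith
    have hp2 : 0 < α + t - u := by linarith
    set a := α / (α - u) with ha
    have ha0 : 0 < a := by positivity
    set y := (α - u) / (α + t - u) with hy
    have hy0 : 0 < y := by positivity
    have hy1 : y ≤ 1 := by rw [hy, div_le_one hp2]; linarith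
    have e1 : α / (α + t - u) = a * y := by rw [ha, hy]; field_simp
    have e2 : 1 + ‖u / α‖ = a⁻¹ := by
      rw [Real.norm_eq_abs, abs_div, abs_of_neg hu, abs_of_pos hα0, ha]; field_simp; ring
    rw [e1, e2, Real.mul_rpow ha0.le hy0.le, Real.rpow_neg (by positivity),
      Real.inv_rpow ha0.le, inv_inv]
    have e3 : a ^ (2 - h) = a ^ (1 - h) * a := by
      rw [show 2 - h = (1 - h) + 1 by ring, Real.rpow_add_one ha0.ne']
    rw [e3]
    obtain ⟨k1, k2⟩ := key y hy0 hy1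
    have k3 : 1 - y ≤ t / α * a := by
      have : 1 - y = t / (α + t - u) := by rw [hy]; field_simp; ring
      rw [this, ha, show t / α * (α / (α - u)) = t / (α - u) by field_simp]
      exact div_le_div_of_nonneg_left ht.le hp1 (by linarith)
    have hap : 0 < a ^ (1 - h) := by positivity
    rw [show a ^ (1 - h) * y ^ (1 - h) - a ^ (1 - h) - 0 = -(a ^ (1 - h) * (1 - y ^ (1 - h))) by ring,
      abs_neg, abs_of_nonneg (by positivity)]
    have hta : 0 < t / α * a := by positivity
    calc a ^ (1 - h) * (1 - y ^ (1 - h)) ≤ a ^ (1 - h) * (4 * (t / α * a)) := by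
          apply mul_le_mul_of_nonneg_left _ hap.le; linarith
      _ = _ := by ring
  · rw [indicator_of_notMem (show u ∉ Iio (0:ℝ) from fun hx => absurd (mem_Iio.1 hx) (by linarith))]
    rcases lt_or_ge u t with hut | hut
    · rw [indicator_of_mem (show u ∈ Iio t from hut), indicator_of_mem (show u ∈ Ioo (0:ℝ) t from ⟨hu, hut⟩)]
      have hp2 : 0 < α + t - u := by linarith
      obtain ⟨k1, k2⟩ := key (α / (α + t - u)) (by positivity)
        (by rw [div_le_one hp2]; linarith)
      have k3 : 1 - α / (α + t - u) ≤ t / α := by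
        have : 1 - α / (α + t - u) = (t - u) / (α + t - u) := by field_simp; ring
        rw [this]
        exact div_le_div₀ ht.le (by linarith) hα0 (by linarith)
      have e2 : 1 + ‖u / α‖ ≤ 2 := by
        rw [Real.norm_eq_abs, abs_of_pos (by positivity)]
        have : u / α ≤ 1 := by rw [div_le_one hα0]; linarith
        linarith
      have e3 : (1 / 4 : ℝ) ≤ (1 + ‖u / α‖) ^ (-(2 - h)) := by
        calc (1 / 4 : ℝ) = (2 : ℝ) ^ (-2 : ℝ) := by
              rw [Real.rpow_neg (by norm_num)]; norm_num
          _ ≤ (2 : ℝ) ^ (-(2 - h)) := Real.rpow_le_rpow_of_exponent_le (by norm_num) (by linarith)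
          _ ≤ _ := Real.rpow_le_rpow_of_nonpos (by positivity) e2 (by linarith)
      simp only [Pi.one_apply, sub_zero]
      rw [abs_sub_comm, abs_of_nonneg k1]
      have htα : 0 < t / α := by positivity
      calc 1 - (α / (α + t - u)) ^ (1 - h) ≤ 4 * t / α * (1 / 4) := by
            rw [show 4 * t / α * (1 / 4) = t / α by ring]; linarith
        _ ≤ _ := mul_le_mul_of_nonneg_left e3 (by positivity)
    · rw [indicator_of_notMem (show u ∉ Iio t from fun hx => absurd (mem_Iio.1 hx) (by linarith)),
        indicator_of_notMem (show u ∉ Ioo (0:ℝ) t from fun hx => absurd hx.2 (by linarith))]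
      simp only [sub_zero, abs_zero]
      positivity

lemma phi_integrable (d : ℝ) (hd0 : 0 < d) :
    Integrable ((Ioc (-1 : ℝ) 1).indicator (fun x : ℝ => |x| ^ (2 * d - 1))) := by
  rw [integrable_indicator_iff measurableSet_Ioc,
    ← intervalIntegrable_iff_integrableOn_Ioc_of_le (by norm_num)]
  have h1 : IntervalIntegrable (fun x : ℝ => |x| ^ (2 * d - 1)) volume 0 1 := by
    refine (intervalIntegral.intervalIntegrable_rpow' (r := 2 * d - 1) (by linarith)).congr ?_
    intro x hx
    rw [uIoc_of_le (by norm_num)] at hx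
    simp only [abs_of_pos hx.1]
  have h2 : IntervalIntegrable (fun x : ℝ => |x| ^ (2 * d - 1)) volume (-1) 0 := by
    have := ((IntervalIntegrable.iff_comp_neg (by simp)).1 h1).symm
    simpa using this
  exact h2.trans h1

/-- for `d ∈ (0,1/2)`, `h ∈ (0, 1/2−d)` and `t > 0`,
`∫∫ F_α(u) F_α(v) |u−v|^{2d−1} du dv → 0` as `α → ∞`; i.e. the increment
`Z^d(t) − Z^d(0)` converges in `L²` to `L^d(t)` as `α → ∞`. -/
theorem increment_converges_to_fLp (d h t : ℝ) (hd0 : 0 < d) (hd2 : d < 1 / 2)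
    (hh0 : 0 < h) (hh : h < 1 / 2 - d) (ht : 0 < t) :
    Tendsto (fun α : ℝ =>
        ∫ v : ℝ, ∫ u : ℝ,
          incrementKernel h t α u * incrementKernel h t α v * |u - v| ^ (2 * d - 1))
      atTop (𝓝 0) := by
  set g : ℝ → ℝ := fun x => (1 + ‖x‖) ^ (-(2 - h)) with hg
  set φ : ℝ → ℝ := (Ioc (-1 : ℝ) 1).indicator (fun x : ℝ => |x| ^ (2 * d - 1)) with hφ
  have ig : Integrable g := integrable_one_add_norm (by simp; linarith)
  have iφ : Integrable φ := phi_integrable d hd0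
  have g0 : ∀ x, 0 ≤ g x := fun x => by simp only [hg]; positivity
  have g1 : ∀ x, g x ≤ 1 := fun x => by
    apply Real.rpow_le_one_of_one_le_of_nonpos
    · have := norm_nonneg x; linarith
    · linarith
  have φ0 : ∀ x, 0 ≤ φ x := fun x => indicator_nonneg (fun y _ => by positivity) x
  have gφ : ∀ x y, g x * |y| ^ (2 * d - 1) ≤ φ y + g x := by
    intro x y
    by_cases hy : y ∈ Ioc (-1 : ℝ) 1
    · have : φ y = |y| ^ (2 * d - 1) := indicator_of_mem hy _
      have h3 : 0 ≤ |y| ^ (2 * d - 1) := by positivity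
      rw [this]
      nlinarith [g0 x, g1 x]
    · have h3 : 1 ≤ |y| := by
        by_contra hc
        rw [not_le, abs_lt] at hc
        exact hy ⟨hc.1, hc.2.le⟩
      have h4 : |y| ^ (2 * d - 1) ≤ 1 :=
        Real.rpow_le_one_of_one_le_of_nonpos h3 (by linarith)
      nlinarith [g0 x, φ0 y]
  set Kg := ∫ x, g x with hKg
  set Kφ := ∫ x, φ x with hKφ
  have lim : Tendsto (fun α : ℝ => 4 * t * (4 * t) * (Kφ + Kg) * Kg * α ^ (2 * d - 1)) atTop (𝓝 0) := by
    have := (tendsto_rpow_neg_atTop (y := 1 - 2 * d) (by linarith)).const_mul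
      (4 * t * (4 * t) * (Kφ + Kg) * Kg)
    simpa [neg_sub] using this
  apply squeeze_zero_norm' _ lim
  filter_upwards [eventually_ge_atTop t] with α hα
  have hα0 : 0 < α := ht.trans_le hα
  have hne : ∀ᵐ u : ℝ, u ≠ 0 := by simp [ae_iff]
  have igα : Integrable (fun u => g (u / α)) := ig.comp_div hα0.ne'
  have Igα : ∫ u, g (u / α) = α * Kg := by
    rw [Measure.integral_comp_div, abs_of_pos hα0, smul_eq_mul]
  have iφα : ∀ v, Integrable (fun u => φ ((u - v) / α)) := fun v =>
    (iφ.comp_div hα0.ne').comp_sub_right v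
  have Iφα : ∀ v, ∫ u, φ ((u - v) / α) = α * Kφ := fun v => by
    rw [integral_sub_right_eq_self (fun u => φ (u / α)) v, Measure.integral_comp_div,
      abs_of_pos hα0, smul_eq_mul]
  set F := incrementKernel h t α with hF
  have hFb : ∀ u, u ≠ 0 → |F u| ≤ 4 * t / α * g (u / α) := fun u hu =>
    kernel_bound h t α u hh0 (by linarith) ht hα hu
  have inner : ∀ v, ‖∫ u : ℝ, F u * F v * |u - v| ^ (2 * d - 1)‖
      ≤ |F v| * (4 * t * α ^ (2 * d - 1) * (Kφ + Kg)) := by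
    intro v
    have hint := (((iφα v).add igα).const_mul (|F v| * (4 * t / α * α ^ (2 * d - 1))))
    refine (norm_integral_le_of_norm_le hint ?_).trans (le_of_eq ?_)
    · filter_upwards [hne] with u hu
      have e : |u - v| ^ (2 * d - 1) = α ^ (2 * d - 1) * |(u - v) / α| ^ (2 * d - 1) := by
        rw [← Real.mul_rpow hα0.le (abs_nonneg _), abs_div, abs_of_pos hα0]
        congr 1; field_simp
      have hp : 0 < α ^ (2 * d - 1) := by positivity
      rw [norm_mul, norm_mul, Real.norm_eq_abs, Real.norm_eq_abs, Real.norm_eq_abs,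
        abs_of_nonneg (show 0 ≤ |u - v| ^ (2 * d - 1) by positivity), e]
      calc |F u| * |F v| * (α ^ (2 * d - 1) * |(u - v) / α| ^ (2 * d - 1))
          ≤ (4 * t / α * g (u / α)) * |F v| * (α ^ (2 * d - 1) * |(u - v) / α| ^ (2 * d - 1)) := by
            gcongr; exact hFb u hu
        _ = |F v| * (4 * t / α * α ^ (2 * d - 1)) * (g (u / α) * |(u - v) / α| ^ (2 * d - 1)) := by
            ring
        _ ≤ _ := mul_le_mul_of_nonneg_left (gφ _ _) (by positivity)
    · rw [integral_const_mul]
      simp only [Pi.add_apply]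
      rw [integral_add (iφα v) igα, Iφα, Igα]
      field_simp
  have Kp : 0 ≤ Kφ + Kg := add_nonneg (integral_nonneg φ0) (integral_nonneg g0)
  refine (norm_integral_le_of_norm_le
    (igα.const_mul (4 * t / α * (4 * t * α ^ (2 * d - 1) * (Kφ + Kg)))) ?_).trans (le_of_eq ?_)
  · filter_upwards [hne] with v hv
    refine (inner v).trans ?_
    calc |F v| * (4 * t * α ^ (2 * d - 1) * (Kφ + Kg))
        ≤ (4 * t / α * g (v / α)) * (4 * t * α ^ (2 * d - 1) * (Kφ + Kg)) :=
          mul_le_mul_of_nonneg_right (hFb v hv) (by positivity)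
      _ = _ := by ring
  · rw [integral_const_mul, Igα]
    field_simp
end

section
/- Let d ∈ (0,1/2), h ∈ (0, 1/2 − d), and t > 0. For α > 0 define G_α : ℝ → ℝ by G_α(v) = (1/h)[(α + t − v)^h − (α + max(v,0) − v)^h] for v ≤ t and G_α(v) = 0 for v > t, and define m : ℝ → ℝ by m(v) = (1/h)[(t − v)_+^h − (−v)_+^h]. Then lim_{α→0^+} ∫_ℝ ∫_ℝ (G_α(u) − m(u))(G_α(v) − m(v)) |u − v|^{2d−1} du dv = 0. -/
open MeasureTheory Real Set Filter Topology

/-- The kernel `G_α` of the time-integrated Gamma mixed fractional Lévy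
Ornstein–Uhlenbeck process (STATEMENT 18):
`G_α(v) = (1/h)[(α+t−v)^h − (α + max(v,0) − v)^h]` for `v ≤ t` and `0` for `v > t`. -/
noncomputable def integratedKernel (h t α v : ℝ) : ℝ :=
  if v ≤ t then (1 / h) * ((α + t - v) ^ h - (α + max v 0 - v) ^ h) else 0

/-- The kernel `m(v) = (1/h)[(t−v)_+^h − (−v)_+^h]` of the limit process `Y^d`
(STATEMENT 18). -/
noncomputable def limitKernel (h t v : ℝ) : ℝ :=
  (1 / h) * (max (t - v) 0 ^ h - max (-v) 0 ^ h)

lemma incr_bound (h a x : ℝ) (h0 : 0 < h) (h1 : h ≤ 1) (ha : 0 ≤ a) (hx : 0 ≤ x) :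
    0 ≤ (a + x) ^ h - x ^ h ∧ (a + x) ^ h - x ^ h ≤ a ^ h := by
  have e1 := Real.rpow_le_rpow hx (by linarith : x ≤ a + x) h0.le
  have e2 := Real.rpow_add_le_add_rpow ha hx h0.le h1
  constructor <;> linarith

lemma incr_neg (r a x y : ℝ) (h0 : -1 ≤ r) (h1 : r ≤ 0) (ha : 0 ≤ a) (hx : 0 < x) (hy : x ≤ y) :
    ‖(a + y) ^ r - y ^ r‖ ≤ x ^ (r - 1) * a := by
  have := Convex.norm_image_sub_le_of_norm_hasDerivWithin_le (s := Ici x)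
    (f := fun z : ℝ => z ^ r) (f' := fun z : ℝ => r * z ^ (r - 1)) (C := x ^ (r - 1))
    (x := y) (y := a + y) ?_ ?_ (convex_Ici x) hy (by simp only [mem_Ici]; linarith)
  · simpa [abs_of_nonneg ha] using this
  · intro z hz
    have hz : x ≤ z := hz
    exact (Real.hasDerivAt_rpow_const (Or.inl (hx.trans_le hz).ne')).hasDerivWithinAt
  · intro z hz
    have hz : x ≤ z := hz
    have e := Real.rpow_le_rpow_of_nonpos hx hz (by linarith : r - 1 ≤ 0)
    have e' := Real.rpow_nonneg (hx.le.trans hz) (r - 1)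
    rw [norm_mul, Real.norm_eq_abs, Real.norm_eq_abs, abs_of_nonneg e']
    have : |r| ≤ 1 := by rw [abs_le]; constructor <;> linarith
    nlinarith

lemma second_diff (h a t x : ℝ) (h0 : 0 < h) (h1 : h ≤ 1) (ha : 0 ≤ a) (ht : 0 ≤ t)
    (hx : 0 < x) :
    ‖((a + (t + x)) ^ h - (t + x) ^ h) - ((a + x) ^ h - x ^ h)‖ ≤ h * (x ^ (h - 2) * a) * t := by
  have := Convex.norm_image_sub_le_of_norm_hasDerivWithin_le (s := Ici x)
    (f := fun z : ℝ => (a + z) ^ h - z ^ h)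
    (f' := fun z : ℝ => h * (a + z) ^ (h - 1) - h * z ^ (h - 1)) (C := h * (x ^ (h - 2) * a))
    (x := x) (y := t + x) ?_ ?_ (convex_Ici x) (by simp) (by simp only [mem_Ici]; linarith)
  · simpa [abs_of_nonneg ht] using this
  · intro z hz
    have hz : x ≤ z := hz
    have d1 : HasDerivAt (fun z : ℝ => a + z) 1 z := (hasDerivAt_id z).const_add a
    have d2 := d1.rpow_const (p := h) (Or.inl (by linarith : 0 < a + z).ne')
    have d3 : HasDerivAt (fun z : ℝ => z ^ h) (h * z ^ (h - 1)) z :=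
      Real.hasDerivAt_rpow_const (Or.inl (hx.trans_le hz).ne')
    rw [one_mul] at d2
    exact (d2.sub d3).hasDerivWithinAt
  · intro z hz
    have hz : x ≤ z := hz
    have e := incr_neg (h - 1) a x z (by linarith) (by linarith) ha hx hz
    rw [← mul_sub, norm_mul, Real.norm_eq_abs h, abs_of_pos h0]
    rw [show h - 1 - 1 = h - 2 by ring] at e
    exact mul_le_mul_of_nonneg_left e h0.le

/-- dominating function -/
noncomputable def domPhi (h t v : ℝ) : ℝ :=
  (Icc (-1) t).indicator (fun _ => (1 : ℝ)) v + (Ioi 1).indicator (fun x : ℝ => x ^ (h - 2)) (-v)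

lemma domPhi_nonneg (h t v : ℝ) : 0 ≤ domPhi h t v := by
  unfold domPhi
  apply add_nonneg
  · exact indicator_nonneg (fun _ _ => zero_le_one) _
  · exact indicator_nonneg (fun x hx => Real.rpow_nonneg (zero_le_one.trans (le_of_lt hx)) _) _

lemma domPhi_le (h t v : ℝ) (h1 : h ≤ 1) : domPhi h t v ≤ 1 := by
  unfold domPhi
  by_cases hv : v < -1
  · rw [indicator_of_notMem (by simp [hv]), indicator_of_mem (by simp only [mem_Ioi]; linarith), zero_add]
    exact Real.rpow_le_one_of_one_le_of_nonpos (by linarith) (by linarith)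
  · rw [indicator_of_notMem (s := Ioi 1) (by simp only [mem_Ioi]; linarith), add_zero]
    exact indicator_le_self' (fun _ _ => zero_le_one) _

lemma domPhi_int (h t : ℝ) (h1 : h < 1) : Integrable (domPhi h t) := by
  unfold domPhi
  apply Integrable.add
  · rw [integrable_indicator_iff measurableSet_Icc]
    exact integrableOn_const (by simp)
  · have : Integrable ((Ioi 1).indicator (fun x : ℝ => x ^ (h - 2))) := by
      rw [integrable_indicator_iff measurableSet_Ioi]
      exact integrableOn_Ioi_rpow_of_lt (by linarith) one_pos
    exact this.comp_neg

lemma diff_bound (h t α v : ℝ) (h0 : 0 < h) (h1 : h ≤ 1) (ht : 0 < t) (ha : 0 < α) (ha1 : α ≤ 1) :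
    |integratedKernel h t α v - limitKernel h t v| ≤ (1 / h + t) * α ^ h * domPhi h t v := by
  have hP := Real.rpow_nonneg ha.le h
  have hnn : 0 ≤ (1 / h + t) * α ^ h * domPhi h t v :=
    mul_nonneg (by positivity) (domPhi_nonneg _ _ _)
  by_cases hv : v ≤ t
  · have key : integratedKernel h t α v - limitKernel h t v =
        (1 / h) * (((α + (t - v)) ^ h - (t - v) ^ h)
          - ((α + max (-v) 0) ^ h - (max (-v) 0) ^ h)) := by
      unfold integratedKernel limitKernel
      rw [if_pos hv, max_eq_left (by linarith : 0 ≤ t - v),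
        show α + max v 0 - v = α + max (-v) 0 by
          rcases le_total v 0 with h' | h'
          · rw [max_eq_right h', max_eq_left (by linarith)]; ring
          · rw [max_eq_left h', max_eq_right (by linarith)]; ring, add_sub_assoc]
      ring
    rw [key, abs_mul, abs_of_pos (by positivity : 0 < 1 / h)]
    by_cases hv1 : v < -1
    · rw [max_eq_left (by linarith)]
      have s := second_diff h α t (-v) h0 h1 ha.le ht.le (by linarith)
      have hphi : domPhi h t v = (-v) ^ (h - 2) := by
        unfold domPhi
        rw [indicator_of_notMem (by simp [hv1]),
          indicator_of_mem (by simp only [mem_Ioi]; linarith), zero_add]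
      rw [hphi] at hnn ⊢
      have hq := Real.rpow_nonneg (by linarith : 0 ≤ -v) (h - 2)
      have haa : α ≤ α ^ h := by
        simpa using Real.rpow_le_rpow_of_exponent_ge ha ha1 h1
      rw [Real.norm_eq_abs, ← sub_eq_add_neg] at s
      calc _ ≤ (1 / h) * (h * ((-v) ^ (h - 2) * α) * t) := by gcongr
        _ = t * α * (-v) ^ (h - 2) := by field_simp
        _ ≤ (1 / h + t) * α ^ h * (-v) ^ (h - 2) := by
          gcongr
          have : 0 < 1 / h := by positivity
          linarith
    · have hphi : domPhi h t v = 1 := by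
        unfold domPhi
        rw [indicator_of_mem (by constructor <;> linarith),
          indicator_of_notMem (by simp only [mem_Ioi]; linarith), add_zero]
      rw [hphi, mul_one]
      obtain ⟨a1, a2⟩ := incr_bound h α (t - v) h0 h1 ha.le (by linarith)
      obtain ⟨b1, b2⟩ := incr_bound h α (max (-v) 0) h0 h1 ha.le (le_max_right _ _)
      calc _ ≤ (1 / h) * α ^ h := by
            gcongr
            rw [abs_le]; constructor <;> linarith
        _ ≤ _ := by gcongr; linarith
  · have : integratedKernel h t α v - limitKernel h t v = 0 := by
      unfold integratedKernel limitKernel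
      rw [if_neg hv, max_eq_right (by linarith), max_eq_right (by linarith)]
      ring
    rw [this, abs_zero]; exact hnn

/-- local part of the Riesz kernel -/
noncomputable def rieszK (r w : ℝ) : ℝ := (Ioc 0 1).indicator (fun x : ℝ => x ^ r) w

lemma rieszK_nonneg (r w : ℝ) : 0 ≤ rieszK r w :=
  indicator_nonneg (fun _ hx => Real.rpow_nonneg (le_of_lt hx.1) _) _

lemma rieszK_int (r : ℝ) (hr : -1 < r) : Integrable (rieszK r) := by
  unfold rieszK
  rw [integrable_indicator_iff measurableSet_Ioc,
    ← intervalIntegrable_iff_integrableOn_Ioc_of_le zero_le_one]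
  exact intervalIntegral.intervalIntegrable_rpow' hr

lemma riesz_le (r w : ℝ) (hr : r < 0) : |w| ^ r ≤ rieszK r w + rieszK r (-w) + 1 := by
  have n1 := rieszK_nonneg r w
  have n2 := rieszK_nonneg r (-w)
  rcases lt_or_ge 1 |w| with h | h
  · have := Real.rpow_le_one_of_one_le_of_nonpos h.le hr.le
    linarith
  · rcases lt_trichotomy w 0 with h' | h' | h'
    · rw [abs_of_neg h'] at h ⊢
      have : rieszK r (-w) = (-w) ^ r := indicator_of_mem (show -w ∈ Ioc (0 : ℝ) 1 from ⟨by linarith, h⟩) _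
      linarith
    · subst h'
      rw [abs_zero, Real.zero_rpow hr.ne]; linarith
    · rw [abs_of_pos h'] at h ⊢
      have : rieszK r w = w ^ r := indicator_of_mem (show w ∈ Ioc (0 : ℝ) 1 from ⟨h', h⟩) _
      linarith

lemma energy_bound (r ε : ℝ) (hr : -1 < r) (hr0 : r < 0) (D Φ : ℝ → ℝ) (h0 : ∀ v, 0 ≤ Φ v)
    (h1 : ∀ v, Φ v ≤ 1) (hI : Integrable Φ) (hε : 0 ≤ ε) (hD : ∀ v, |D v| ≤ ε * Φ v) :
    ‖∫ v : ℝ, ∫ u : ℝ, D u * D v * |u - v| ^ r‖ ≤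
      ε ^ 2 * ((∫ v, Φ v) * ((∫ w, rieszK r w + rieszK r (-w)) + ∫ v, Φ v)) := by
  set c := ∫ w, (rieszK r w + rieszK r (-w)) with hc
  set M := ∫ v, Φ v with hM
  have hk : Integrable (fun w => rieszK r w + rieszK r (-w)) :=
    (rieszK_int r hr).add (rieszK_int r hr).comp_neg
  have inner : ∀ v, ‖∫ u : ℝ, D u * D v * |u - v| ^ r‖ ≤ ε ^ 2 * (c + M) * Φ v := by
    intro v
    have hkv : Integrable (fun u => rieszK r (u - v) + rieszK r (-(u - v))) := hk.comp_sub_right v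
    have hint : ∫ u, (rieszK r (u - v) + rieszK r (-(u - v))) = c :=
      integral_sub_right_eq_self (fun w => rieszK r w + rieszK r (-w)) v
    have := norm_integral_le_of_norm_le (f := fun u => D u * D v * |u - v| ^ r)
      (g := fun u => ε ^ 2 * Φ v * ((rieszK r (u - v) + rieszK r (-(u - v))) + Φ u))
      ((hkv.add hI).const_mul _) (Eventually.of_forall fun u => ?_)
    · refine this.trans (le_of_eq ?_)
      rw [integral_const_mul, integral_add hkv hI, hint]
      ring
    · have hp := Real.rpow_nonneg (abs_nonneg (u - v)) r
      have k0 : 0 ≤ rieszK r (u - v) + rieszK r (-(u - v)) :=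
        add_nonneg (rieszK_nonneg _ _) (rieszK_nonneg _ _)
      rw [norm_mul, norm_mul, Real.norm_eq_abs, Real.norm_eq_abs, Real.norm_eq_abs,
        abs_of_nonneg hp]
      have hv := h0 v
      have hu := h0 u
      calc |D u| * |D v| * |u - v| ^ r ≤ (ε * Φ u) * (ε * Φ v) *
            (rieszK r (u - v) + rieszK r (-(u - v)) + 1) := by
            gcongr
            · exact hD u
            · exact hD v
            · exact riesz_le r _ hr0
        _ = ε ^ 2 * Φ v * (Φ u * (rieszK r (u - v) + rieszK r (-(u - v))) + Φ u) := by ring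
        _ ≤ _ := by
            gcongr
            exact mul_le_of_le_one_left k0 (h1 u)
  have := norm_integral_le_of_norm_le (f := fun v => ∫ u : ℝ, D u * D v * |u - v| ^ r)
      (hI.const_mul (ε ^ 2 * (c + M))) (Eventually.of_forall inner)
  refine this.trans (le_of_eq ?_)
  rw [integral_const_mul]
  ring

theorem integrated_process_converges (d h t : ℝ) (hd0 : 0 < d) (hd2 : d < 1 / 2)
    (hh0 : 0 < h) (hh : h < 1 / 2 - d) (ht : 0 < t) :
    Tendsto (fun α : ℝ =>
        ∫ v : ℝ, ∫ u : ℝ,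
          (integratedKernel h t α u - limitKernel h t u) *
            (integratedKernel h t α v - limitKernel h t v) * |u - v| ^ (2 * d - 1))
      (𝓝[>] (0 : ℝ)) (𝓝 0) := by
  have h1 : h < 1 := by linarith
  set K := (∫ v, domPhi h t v) *
    ((∫ w, rieszK (2 * d - 1) w + rieszK (2 * d - 1) (-w)) + ∫ v, domPhi h t v)
  have lim : Tendsto (fun α : ℝ => ((1 / h + t) * α ^ h) ^ 2 * K) (𝓝[>] (0 : ℝ)) (𝓝 0) := by
    have c : ContinuousAt (fun α : ℝ => ((1 / h + t) * α ^ h) ^ 2 * K) 0 := by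
      have := Real.continuousAt_rpow_const 0 h (Or.inr hh0.le)
      exact ((continuousAt_const.mul this).pow 2).mul continuousAt_const
    have := c.tendsto
    simp only [Real.zero_rpow hh0.ne'] at this
    simp only [mul_zero, ne_eq, OfNat.ofNat_ne_zero, not_false_eq_true, zero_pow, zero_mul] at this
    exact this.mono_left nhdsWithin_le_nhds
  refine squeeze_zero_norm' ?_ lim
  filter_upwards [Ioc_mem_nhdsGT (zero_lt_one (α := ℝ))] with α hα
  have hP := Real.rpow_nonneg hα.1.le h
  exact energy_bound (2 * d - 1) ((1 / h + t) * α ^ h) (by linarith) (by linarith)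
    (fun v => integratedKernel h t α v - limitKernel h t v) (domPhi h t)
    (domPhi_nonneg h t) (fun v => domPhi_le h t v h1.le) (domPhi_int h t h1) (by positivity)
    (fun v => diff_bound h t α v hh0 h1.le ht hα.1 hα.2)
end
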